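/- For all η > 0, ρ² > 0 and x ∈ ℝ, the integral over s ∈ (0, ∞) of (2π ρ² s)^(−1/2) · exp(−x²/(2 ρ² s)) · exp(−(η/2)(s + 1/s)) with respect to s equals (η ρ²)^(−1/2) · exp(−√(η (η + x²/ρ²))). -/

import Mathlib

open MeasureTheory Real

lemma aux_integral (p q : ℝ) (hp : 0 < p) (hq : 0 < q) :
    ∫ s in Set.Ioi (0 : ℝ), (√s)⁻¹ * Real.exp (-(p ^ 2 * s + q ^ 2 / s))
      = √π / p * Real.exp (-(2 * p * q)) := by
  have hpq : 0 < p * q := mul_pos hp hq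
  have hw2 : ∀ u : ℝ, √(u ^ 2 + 4 * (p * q)) ^ 2 = u ^ 2 + 4 * (p * q) := fun u =>
    Real.sq_sqrt (by positivity)
  have hw : ∀ u : ℝ, 0 < √(u ^ 2 + 4 * (p * q)) := fun u => Real.sqrt_pos.2 (by positivity)
  have habs : ∀ u : ℝ, |u| < √(u ^ 2 + 4 * (p * q)) := fun u => by
    rw [← Real.sqrt_sq_eq_abs]
    exact Real.sqrt_lt_sqrt (by positivity) (by linarith)
  have hg : ∀ u : ℝ, 0 < u + √(u ^ 2 + 4 * (p * q)) := fun u => by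
    have := habs u
    have := neg_abs_le u
    linarith
  let S : ℝ → ℝ := fun u => ((u + √(u ^ 2 + 4 * (p * q))) / (2 * p)) ^ 2
  let dS : ℝ → ℝ := fun u => 2 * ((u + √(u ^ 2 + 4 * (p * q))) / (2 * p)) *
    ((1 + u / √(u ^ 2 + 4 * (p * q))) / (2 * p))
  have hder : ∀ u ∈ Set.univ, HasDerivWithinAt S (dS u) Set.univ u := by
    intro u _
    have h1 : HasDerivAt (fun u : ℝ => u ^ 2 + 4 * (p * q)) (2 * u) u := by
      simpa using (hasDerivAt_pow 2 u).add_const (4 * (p * q))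
    have h2 := ((((hasDerivAt_id u).add (h1.sqrt (by positivity))).div_const (2 * p)).pow 2)
    refine HasDerivAt.hasDerivWithinAt ?_
    refine h2.congr_deriv ?_
    simp only [dS, id, Pi.add_apply]
    rw [mul_div_mul_left _ _ (two_ne_zero' ℝ)]
    norm_num
  have hinj : Set.InjOn S Set.univ := by
    intro u _ v _ h
    have h1 : (u + √(u ^ 2 + 4 * (p * q))) / (2 * p) = (v + √(v ^ 2 + 4 * (p * q))) / (2 * p) :=
      (pow_left_inj₀ (div_pos (hg u) (by positivity)).le
        (div_pos (hg v) (by positivity)).le two_ne_zero).1 h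
    have h2 : u + √(u ^ 2 + 4 * (p * q)) = v + √(v ^ 2 + 4 * (p * q)) := by
      exact (div_left_inj' (by positivity)).1 h1
    have h3 := hw2 u
    have h4 := hw2 v
    have h5 : (u + √(u ^ 2 + 4 * (p * q))) * (u - v) = 0 := by
      have e : √(u ^ 2 + 4 * (p * q)) = v + √(v ^ 2 + 4 * (p * q)) - u := by linarith
      rw [e] at h3 ⊢
      nlinarith
    rcases mul_eq_zero.1 h5 with h | h
    · exact absurd h (hg u).ne'
    · linarith
  have himg : S '' Set.univ = Set.Ioi 0 := by
    ext s
    constructor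
    · rintro ⟨u, _, rfl⟩
      exact pow_pos (div_pos (hg u) (by positivity)) 2
    · intro hs
      have hr : 0 < √s := Real.sqrt_pos.2 hs
      refine ⟨p * √s - q / √s, trivial, ?_⟩
      have e : (p * √s - q / √s) ^ 2 + 4 * (p * q) = (p * √s + q / √s) ^ 2 := by
        field_simp
        ring
      simp only [S]
      rw [e, Real.sqrt_sq (by positivity)]
      have : (p * √s - q / √s + (p * √s + q / √s)) / (2 * p) = √s := by
        field_simp
        ring
      rw [this, Real.sq_sqrt (le_of_lt hs)]
  rw [← himg, integral_image_eq_integral_abs_deriv_smul MeasurableSet.univ hder hinj,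
    setIntegral_univ]
  have hpt : ∀ u : ℝ, |dS u| • ((√(S u))⁻¹ * Real.exp (-(p ^ 2 * S u + q ^ 2 / S u)))
      = (Real.exp (-(2 * p * q)) / p) *
        ((1 + u / √(u ^ 2 + 4 * (p * q))) * Real.exp (-1 * u ^ 2)) := by
    intro u
    have hgu := hg u
    have hwu := hw u
    have h2 := hw2 u
    have e1 : √(S u) = (u + √(u ^ 2 + 4 * (p * q))) / (2 * p) :=
      Real.sqrt_sq (by positivity)
    have e0 : 0 < 1 + u / √(u ^ 2 + 4 * (p * q)) := by
      have : 1 + u / √(u ^ 2 + 4 * (p * q))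
        = (u + √(u ^ 2 + 4 * (p * q))) / √(u ^ 2 + 4 * (p * q)) := by
        field_simp
        ring
      rw [this]; positivity
    have e2 : |dS u| = dS u := abs_of_pos (by simp only [dS]; positivity)
    have e3 : -(p ^ 2 * S u + q ^ 2 / S u) = -(2 * p * q) + -1 * u ^ 2 := by
      have k : q / ((u + √(u ^ 2 + 4 * (p * q))) / (2 * p))
          = (√(u ^ 2 + 4 * (p * q)) - u) / 2 := by
        rw [div_eq_iff (by positivity)]
        generalize √(u ^ 2 + 4 * (p * q)) = w at h2
        field_simp
        nlinarith
      have k2 : q ^ 2 / S u = ((√(u ^ 2 + 4 * (p * q)) - u) / 2) ^ 2 := by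
        rw [← k, div_pow]
      have k3 : p ^ 2 * S u = ((√(u ^ 2 + 4 * (p * q)) + u) / 2) ^ 2 := by
        simp only [S]
        field_simp
        ring
      rw [k2, k3]
      nlinarith
    rw [e1, e2, e3, Real.exp_add]
    simp only [dS, smul_eq_mul]
    generalize 1 + u / √(u ^ 2 + 4 * (p * q)) = z
    generalize u + √(u ^ 2 + 4 * (p * q)) = g at hgu
    field_simp
  simp_rw [hpt]
  rw [integral_const_mul]
  have hG : Integrable (fun u : ℝ => Real.exp (-1 * u ^ 2)) := integrable_exp_neg_mul_sq one_pos
  have hcont : Continuous (fun u : ℝ => u / √(u ^ 2 + 4 * (p * q))) :=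
    continuous_id.div (by fun_prop) (fun u => (hw u).ne')
  have hO : Integrable (fun u : ℝ => u / √(u ^ 2 + 4 * (p * q)) * Real.exp (-1 * u ^ 2)) := by
    refine hG.mono (hcont.mul (by fun_prop)).aestronglyMeasurable (ae_of_all _ fun u => ?_)
    rw [norm_mul]
    refine mul_le_of_le_one_left (norm_nonneg _) ?_
    rw [Real.norm_eq_abs, abs_div, abs_of_pos (hw u)]
    exact (div_le_one (hw u)).2 (habs u).le
  have hO0 : ∫ u : ℝ, u / √(u ^ 2 + 4 * (p * q)) * Real.exp (-1 * u ^ 2) = 0 := by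
    have h := integral_neg_eq_self
      (fun u : ℝ => u / √(u ^ 2 + 4 * (p * q)) * Real.exp (-1 * u ^ 2)) volume
    simp only [neg_sq, neg_div, neg_mul, integral_neg] at h
    simp only [neg_mul]
    linarith
  have : ∫ u : ℝ, (1 + u / √(u ^ 2 + 4 * (p * q))) * Real.exp (-1 * u ^ 2) = √π := by
    simp_rw [add_mul, one_mul]
    rw [integral_add hG hO, hO0, integral_gaussian]
    simp
  rw [this]
  ring

/-- Mixing a `N(0, ρ² s)` density over the unnormalized `GIG(1, η, η)` kernel
produces the unnormalized hyperbolic kernel. -/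
theorem normal_gig_mixture (η ρ2 x : ℝ) (hη : 0 < η) (hρ : 0 < ρ2) :
    ∫ s in Set.Ioi (0 : ℝ),
        (2 * π * ρ2 * s) ^ (-(1 : ℝ) / 2) * Real.exp (-x ^ 2 / (2 * ρ2 * s))
          * Real.exp (-(η / 2) * (s + 1 / s))
      = (η * ρ2) ^ (-(1 : ℝ) / 2)
          * Real.exp (-Real.sqrt (η * (η + x ^ 2 / ρ2))) := by
  have hr : ∀ y : ℝ, 0 < y → y ^ (-(1 : ℝ) / 2) = (√y)⁻¹ := fun y hy => by
    rw [neg_div, Real.rpow_neg hy.le, Real.sqrt_eq_rpow]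
  have hb : 0 < η / 2 + x ^ 2 / (2 * ρ2) := by positivity
  have ha : 0 < η / 2 := by positivity
  have key := aux_integral (√(η / 2)) (√(η / 2 + x ^ 2 / (2 * ρ2)))
    (Real.sqrt_pos.2 ha) (Real.sqrt_pos.2 hb)
  rw [Real.sq_sqrt ha.le, Real.sq_sqrt hb.le] at key
  have e : ∀ s ∈ Set.Ioi (0 : ℝ),
      (2 * π * ρ2 * s) ^ (-(1 : ℝ) / 2) * Real.exp (-x ^ 2 / (2 * ρ2 * s))
          * Real.exp (-(η / 2) * (s + 1 / s))
      = (√(2 * π * ρ2))⁻¹ *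
        ((√s)⁻¹ * Real.exp (-(η / 2 * s + (η / 2 + x ^ 2 / (2 * ρ2)) / s))) := by
    intro s hs
    have hs : 0 < s := hs
    rw [hr _ (by positivity), Real.sqrt_mul (by positivity), mul_assoc, ← Real.exp_add, mul_inv,
      mul_assoc]
    congr 3
    field_simp
    ring
  rw [setIntegral_congr_fun measurableSet_Ioi e, integral_const_mul, key, hr _ (by positivity),
    ← mul_assoc]
  congr 1
  · rw [← Real.sqrt_div pi_pos.le, ← Real.sqrt_inv, ← Real.sqrt_inv,
      ← Real.sqrt_mul (by positivity)]
    congr 1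
    field_simp
  · congr 2
    rw [mul_assoc, ← Real.sqrt_mul ha.le]
    symm
    rw [Real.sqrt_eq_iff_mul_self_eq (by positivity) (by positivity), mul_mul_mul_comm,
      Real.mul_self_sqrt (by positivity)]
    field_simp
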